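/- Let (M, H) be a sufficiently saturated H-structure and let φ(x, z, ā) be an L-formula with parameters ā such that for every c ∈ M the formula φ(x, c, ā) is algebraic (has only finitely many solutions in x). Then the L-formula ∃z φ(x, z, ā) is non-algebraic if and only if the L_H-formula ∃z ∈ H φ(x, z, ā) is non-algebraic. -/

import Mathlib

open FirstOrder

namespace HPaper

universe u v w

variable {M : Type w} (L : FirstOrder.Language.{u, v}) [L.Structure M]


/-- `x` is (model-theoretically) algebraic over the parameter set `A`:
it satisfies a formula with parameters in `A` having finitely many solutions. -/
def acl (A : Set M) : Set M :=
  {x : M | ∃ φ : (L.withConstants A).Formula (Fin 1),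
      {y : M | φ.Realize (fun _ => y)}.Finite ∧ φ.Realize (fun _ => x)}

/-- Two tuples have the same `L`-type over the parameter set `A`. -/
def SameType (A : Set M) {α : Type*} (a b : α → M) : Prop :=
  ∀ φ : (L.withConstants A).Formula α, φ.Realize a ↔ φ.Realize b

/-- The (algebraic-closure) dimension of a finite tuple over a base set: the least
cardinality of a subtuple over which (together with the base) the whole tuple is algebraic. -/
noncomputable def dim {α : Type*} [Fintype α] (a : α → M) (B : Set M) : ℕ :=
  sInf {k : ℕ | ∃ s : Finset α, s.card = k ∧ ∀ i, a i ∈ acl L (B ∪ (a '' ↑s))}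

/-- The tuple `a` is algebraically independent from `C` over `B`. -/
def Indep {α : Type*} [Fintype α] (a : α → M) (B C : Set M) : Prop :=
  dim L a (B ∪ C) = dim L a B

/-- The set `A` is algebraically independent from `C` over `B`. -/
def SetIndep (A B C : Set M) : Prop :=
  ∀ (n : ℕ) (a : Fin n → M), (∀ i, a i ∈ A) → Indep L a B C

/-- `A` is `H`-independent: `A` is independent from `H` over `A ∩ H`. -/
def HIndepSet (H A : Set M) : Prop :=
  SetIndep L A (A ∩ H) H

/-- A tuple is `H`-independent. -/
def HIndepTuple (H : Set M) {α : Type*} [Fintype α] (a : α → M) : Prop :=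
  Indep L a (Set.range a ∩ H) H

/-- `A` has finite dimension. -/
def FinDim (A : Set M) : Prop :=
  ∃ s : Finset M, A ⊆ acl L ↑s

/-- The exchange property for algebraic closure. -/
def Exchange (L' : FirstOrder.Language.{u, v}) (N : Type w) [L'.Structure N] : Prop :=
  ∀ (A : Set N) (a b : N), a ∈ acl L' (A ∪ {b}) → a ∉ acl L' A → b ∈ acl L' (A ∪ {a})

/-- Uniform elimination of the quantifier `∃^∞` in the structure `N`. -/
def ElimInfty (L' : FirstOrder.Language.{u, v}) (N : Type w) [L'.Structure N] : Prop :=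
  ∀ (q : ℕ) (φ : L'.Formula (Fin 1 ⊕ Fin q)), ∃ Nb : ℕ, ∀ v : Fin q → N,
    {x : N | φ.Realize (Sum.elim (fun _ => x) v)}.Finite →
      {x : N | φ.Realize (Sum.elim (fun _ => x) v)}.ncard ≤ Nb

/-- `N` is a geometric structure: acl satisfies exchange and `∃^∞` is eliminated. -/
def Geometric (L' : FirstOrder.Language.{u, v}) (N : Type w) [L'.Structure N] : Prop :=
  Exchange L' N ∧ ElimInfty L' N

/-- The density property of the pair `(M, H)`. -/
def DensityProp (H : Set M) : Prop :=
  ∀ A : Set M, FinDim L A → ∀ a : M, a ∉ acl L A →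
    ∃ h ∈ H, SameType L A (fun _ : Fin 1 => a) (fun _ => h)

/-- The extension property of the pair `(M, H)`. -/
def ExtensionProp (H : Set M) : Prop :=
  ∀ A : Set M, FinDim L A → ∀ a : M, a ∉ acl L A →
    ∃ b : M, b ∉ acl L (A ∪ H) ∧ SameType L A (fun _ : Fin 1 => a) (fun _ => b)

/-- `H` is an algebraically independent set. -/
def AclIndepSet (H : Set M) : Prop :=
  ∀ h ∈ H, h ∉ acl L (H \ {h})

/-- `(M, H)` is an `H`-structure. -/
def IsHStructure (H : Set M) : Prop :=
  DensityProp L H ∧ ExtensionProp L H ∧ AclIndepSet L H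

/-- `h` enumerates an `H`-basis of the tuple `a` over the set `A`: a minimal-length tuple of
distinct elements of `H` such that `a⌢h` is independent from `H` over `A`. -/
def IsHBasis (H : Set M) (A : Set M) {α : Type*} [Fintype α] {k : ℕ}
    (a : α → M) (h : Fin k → M) : Prop :=
  (∀ i, h i ∈ H) ∧ Function.Injective h ∧ Indep L (Sum.elim a h) A H ∧
    ∀ (k' : ℕ) (h' : Fin k' → M), (∀ i, h' i ∈ H) → Indep L (Sum.elim a h') A H → k ≤ k'

/-- Countable saturation (a rendering of "sufficiently saturated", adequate for
the countably-many-parameters arguments in the paper). -/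
def CountSaturated (L' : FirstOrder.Language.{u, v}) (N : Type w) [L'.Structure N] : Prop :=
  ∀ (A : Set N), A.Countable → ∀ (n : ℕ)
    (S : Set ((L'.withConstants A).Formula (Fin n))),
    (∀ F : Finset ((L'.withConstants A).Formula (Fin n)), ↑F ⊆ S →
      ∃ a : Fin n → N, ∀ φ ∈ F, φ.Realize a) →
    ∃ a : Fin n → N, ∀ φ ∈ S, φ.Realize a

/-- The theory of `M` is nowhere trivial. -/
def NowhereTrivial (L' : FirstOrder.Language.{u, v}) (N : Type w) [L'.Structure N] : Prop :=
  ∀ (A : Set N), A.Countable → ∀ a : N, a ∉ acl L' A →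
    ∃ (m k : ℕ) (b : Fin m → N) (c : Fin k → N),
      Indep L' (fun _ : Fin 1 => a) A (Set.range b) ∧
      Indep L' (fun _ : Fin 1 => a) A (Set.range c) ∧
      a ∈ acl L' ((A ∪ Set.range b) ∪ Set.range c)



/-- The formula `φ(x̄, b̄)` divides over `A`: there is an `A`-indiscernible sequence of
tuples, each with the same type as `b̄` over `A`, along which the instances of `φ` are
`k`-inconsistent. -/
def FormulaDivides {α : Type*} {m : ℕ} (φ : L.Formula (α ⊕ Fin m))
    (b : Fin m → M) (A : Set M) : Prop :=
  ∃ (bs : ℕ → Fin m → M) (k : ℕ), 0 < k ∧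
    (∀ i, SameType L A (bs i) b) ∧
    (∀ (l : ℕ) (f g : Fin l → ℕ), StrictMono f → StrictMono g →
      SameType L A (fun p : Fin l × Fin m => bs (f p.1) p.2)
        (fun p : Fin l × Fin m => bs (g p.1) p.2)) ∧
    (∀ s : Finset ℕ, s.card = k → ¬ ∃ x : α → M, ∀ i ∈ s, φ.Realize (Sum.elim x (bs i)))

/-- The formula `φ(x̄, b̄)` forks over `A`: it implies a finite disjunction of formulas,
each of which divides over `A`. -/
def FormulaForks {α : Type*} {m : ℕ} (φ : L.Formula (α ⊕ Fin m))
    (b : Fin m → M) (A : Set M) : Prop :=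
  ∃ (N : ℕ) (m' : Fin N → ℕ) (ψ : ∀ j, L.Formula (α ⊕ Fin (m' j)))
    (c : ∀ j, Fin (m' j) → M),
    (∀ j, FormulaDivides L (ψ j) (c j) A) ∧
    ∀ x : α → M, φ.Realize (Sum.elim x b) → ∃ j, (ψ j).Realize (Sum.elim x (c j))

/-- The type of `ā` over `B` forks over `A`. -/
def TypeForks {α : Type*} (a : α → M) (B A : Set M) : Prop :=
  ∃ (m : ℕ) (φ : L.Formula (α ⊕ Fin m)) (b : Fin m → M),
    (∀ i, b i ∈ B) ∧ φ.Realize (Sum.elim a b) ∧ FormulaForks L φ b A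

/-- `SUge L a A α` : the `SU`-rank of `tp(ā/A)` is at least `α`. -/
noncomputable def SUge {α' : Type*} (a : α' → M) (o : Ordinal.{0}) (A : Set M) : Prop :=
  Ordinal.lt_wf.fix (C := fun _ => Set M → Prop)
    (fun o ih A => ∀ β (h : β < o), ∃ B : Set M, A ⊆ B ∧ TypeForks L a B A ∧ ih β h B) o A

/-- The `SU`-rank of `tp(ā/A)`, as an ordinal (assuming it is ordinal-valued). -/
noncomputable def SU {α' : Type*} (a : α' → M) (A : Set M) : Ordinal.{0} :=
  sSup {o : Ordinal | SUge L a o A}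

/-- `T` has `SU`-rank one: every non-algebraic `1`-type has `SU`-rank `1`. -/
def SURankOne (L' : FirstOrder.Language.{u, v}) (N : Type w) [L'.Structure N] : Prop :=
  (∀ (a : N) (A : Set N), a ∈ acl L' A → SU L' (fun _ : Fin 1 => a) A = 0) ∧
  (∀ (a : N) (A : Set N), a ∉ acl L' A → SU L' (fun _ : Fin 1 => a) A = 1)

/-- The `SU`-rank of the (type-)definable set `X` over `A` equals `o` (and is attained). -/
def SUSetEq {α' : Type*} (X : Set (α' → M)) (A : Set M) (o : Ordinal.{0}) : Prop :=
  (∀ a ∈ X, SU L a A ≤ o) ∧ ∃ a ∈ X, SU L a A = o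

/-- The `SU`-rank of the set `X` over `A` is (strictly) less than `o`. -/
def SUSetLt {α' : Type*} (X : Set (α' → M)) (A : Set M) (o : Ordinal.{0}) : Prop :=
  ∀ a ∈ X, SU L a A < o

/-- Shorthand for the ordinal `ω·n + k`. -/
noncomputable def wnk (n k : ℕ) : Ordinal.{0} :=
  Ordinal.omega0 * (n : Ordinal) + (k : Ordinal)



/-- The language consisting of a single unary predicate. -/
def unaryLang : FirstOrder.Language.{0, 0} :=
  ⟨fun _ => Empty, fun n => match n with | 1 => PUnit | _ => Empty⟩

/-- Interpret the unary predicate of `unaryLang` as membership in `H`. -/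
def unaryStructure (H : Set M) : unaryLang.Structure M where
  funMap := fun {_} f _ => Empty.elim f
  RelMap := fun {n} r v =>
    match n, r, v with
    | 1, _, v => v 0 ∈ H
    | 0, r, _ => Empty.elim r
    | (_ + 2), r, _ => Empty.elim r

/-- The language `L_H = L ∪ {H}`. -/
def LH (L : FirstOrder.Language.{u, v}) : FirstOrder.Language :=
  L.sum unaryLang

/-- The `L_H`-structure on `M` induced by the `L`-structure and the set `H`. -/
def hStructure (H : Set M) : (LH L).Structure M :=
  letI : unaryLang.Structure M := unaryStructure H
  inferInstanceAs ((L.sum unaryLang).Structure M)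

/-- Realization of `L_H`-formulas in `(M, H)`. -/
def RealizeH (H : Set M) {α : Type*} (φ : (LH L).Formula α) (v : α → M) : Prop :=
  letI := hStructure L H
  φ.Realize v

/-- `L_H`-definability over a parameter set, in `(M, H)`. -/
def DefinableH (H : Set M) {α : Type*} (A : Set M) (s : Set (α → M)) : Prop :=
  letI := hStructure L H
  Set.Definable A (LH L) s

/-- `acl` in the sense of `L_H` in `(M, H)`. -/
noncomputable def aclH (H : Set M) (A : Set M) : Set M :=
  letI := hStructure L H
  acl (LH L) A

/-- Equality of `L_H`-types over a parameter set, in `(M, H)`. -/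
def SameTypeH (H : Set M) (A : Set M) {α : Type*} (a b : α → M) : Prop :=
  letI := hStructure L H
  SameType (LH L) A a b


/-- `SU`-rank in the sense of `L_H`, computed in `(M, H)`. -/
noncomputable def SUH (H : Set M) {α' : Type*} (a : α' → M) (A : Set M) : Ordinal.{0} :=
  letI := hStructure L H
  SU (LH L) a A

/-- `SUge` in the sense of `L_H`, computed in `(M, H)`. -/
noncomputable def SUgeH (H : Set M) {α' : Type*} (a : α' → M) (o : Ordinal.{0})
    (A : Set M) : Prop :=
  letI := hStructure L H
  SUge (LH L) a o A

/-- The `L_H`-`SU`-rank of the set `X` over `A` equals `o` (and is attained). -/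
def SUSetEqH (H : Set M) {α' : Type*} (X : Set (α' → M)) (A : Set M)
    (o : Ordinal.{0}) : Prop :=
  letI := hStructure L H
  SUSetEq (LH L) X A o

/-- The `L_H`-`SU`-rank of the set `X` over `A` is less than `o`. -/
def SUSetLtH (H : Set M) {α' : Type*} (X : Set (α' → M)) (A : Set M)
    (o : Ordinal.{0}) : Prop :=
  letI := hStructure L H
  SUSetLt (LH L) X A o


/-- `(M, H)` is countably saturated as an `L_H`-structure. -/
def CountSaturatedH (H : Set M) : Prop :=
  letI := hStructure L H
  CountSaturated (LH L) M



variable {L}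

/-- The inclusion of `L` into `L_H`. -/
def inclLH (L : FirstOrder.Language.{u, v}) : L →ᴸ LH L :=
  FirstOrder.Language.LHom.sumInl

theorem isExpansionOn_inclLH (H : Set M) :
    letI := hStructure L H
    (inclLH L).IsExpansionOn M :=
  letI : unaryLang.Structure M := unaryStructure H
  inferInstanceAs
    ((FirstOrder.Language.LHom.sumInl : L →ᴸ L.sum unaryLang).IsExpansionOn M)

/-- The `L`-reduct of a countably saturated pair is countably saturated. -/
theorem CountSaturatedH.countSaturated {H : Set M} (hsat : CountSaturatedH L H) :
    CountSaturated L M := by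
  classical
  let := hStructure L H
  have : (inclLH L).IsExpansionOn M := isExpansionOn_inclLH H
  intro A hA n S hS
  obtain ⟨a, ha⟩ := hsat A hA n (((inclLH L).addConstants A).onFormula '' S) <| by
    intro F hF
    obtain ⟨G, hGS, rfl⟩ := Finset.subset_set_image_iff.1 hF
    obtain ⟨a, ha⟩ := hS G hGS
    refine ⟨a, fun ψ hψ => ?_⟩
    obtain ⟨χ, hχ, rfl⟩ := Finset.mem_image.1 hψ
    exact (FirstOrder.Language.LHom.realize_onFormula _ χ).2 (ha χ hχ)
  exact ⟨a, fun χ hχ => (FirstOrder.Language.LHom.realize_onFormula _ χ).1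
    (ha _ (Set.mem_image_of_mem _ hχ))⟩

theorem subset_acl (A : Set M) : A ⊆ acl L A := fun a ha => by
  refine ⟨(FirstOrder.Language.Term.var 0).equal (L.con (⟨a, ha⟩ : A)).term, ?_, ?_⟩
  · refine (Set.finite_singleton a).subset fun y hy => ?_
    simpa using hy
  · simp

theorem FinDim.of_finite {A : Set M} (hA : A.Finite) : FinDim L A :=
  ⟨hA.toFinset, by simpa using subset_acl A⟩

/-- In a countably saturated structure, an infinite set definable over a countable set `A`
has a point outside `acl A`. -/
theorem CountSaturated.exists_notMem_acl (hsat : CountSaturated L M) {A : Set M}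
    (hA : A.Countable) (θ : (L.withConstants A).Formula (Fin 1))
    (hθ : {z : M | θ.Realize fun _ => z}.Infinite) :
    ∃ z ∉ acl L A, θ.Realize fun _ => z := by
  classical
  let algebraic : Set ((L.withConstants A).Formula (Fin 1)) :=
    {ψ | {y : M | ψ.Realize fun _ => y}.Finite}
  obtain ⟨a, ha⟩ := hsat A hA 1
    (insert θ (FirstOrder.Language.BoundedFormula.not '' algebraic)) <| by
    intro F hF
    have hcover : {z : M | ∃ ψ ∈ F, ψ ≠ θ ∧ ¬ ψ.Realize fun _ => z}.Finite := by
      have : {z : M | ∃ ψ ∈ F, ψ ≠ θ ∧ ¬ ψ.Realize fun _ => z} =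
          ⋃ ψ ∈ F, {z : M | ψ ≠ θ ∧ ¬ ψ.Realize fun _ => z} := by
        ext; simp only [Set.mem_iUnion, Set.mem_ofPred_eq, exists_prop]
      rw [this]
      refine F.finite_toSet.biUnion fun ψ hψ => ?_
      rcases hF hψ with rfl | ⟨χ, hχ, rfl⟩
      · simp
      · refine Set.Finite.subset hχ fun z hz => ?_
        simpa using hz.2
    obtain ⟨z, hz, hz'⟩ := hθ.exists_notMem_finite hcover
    refine ⟨fun _ => z, fun ψ hψ => ?_⟩
    by_cases h : ψ = θ
    · exact h ▸ hz
    · by_contra hn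
      exact hz' ⟨ψ, hψ, h, hn⟩
  have hconst : a = fun _ => a 0 := funext fun i => by rw [Subsingleton.elim i 0]
  rw [hconst] at ha
  refine ⟨a 0, ?_, ha θ (Set.mem_insert _ _)⟩
  rintro ⟨ψ, hψ, hz⟩
  exact (FirstOrder.Language.Formula.realize_not.1
    (ha _ (Set.mem_insert_of_mem _ (Set.mem_image_of_mem _ hψ)))) hz

open FirstOrder.Language in
/-- The projection to `z` of the pairs satisfying `φ(x, z, c)` with `x` outside a finite set `Y`
is definable by a formula with parameters in `c` and `Y`. -/
theorem exists_formula_exists_notMem {r : ℕ} (φ : L.Formula (Fin 2 ⊕ Fin r)) (c : Fin r → M)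
    {Y : Set M} (hY : Y.Finite) :
    ∃ θ : (L.withConstants (Set.range c ∪ Y : Set M)).Formula (Fin 1), ∀ z : M,
      θ.Realize (fun _ => z) ↔ ∃ x ∉ Y, φ.Realize (Sum.elim ![x, z] c) := by
  set A : Set M := Set.range c ∪ Y
  have hφ : A.Definable L {v : Fin 2 → M | φ.Realize (Sum.elim v c)} := by
    rw [Set.definable_iff_exists_formula_sum]
    refine ⟨φ.relabel (Sum.elim Sum.inr fun i => Sum.inl ⟨c i, Or.inl ⟨i, rfl⟩⟩), ?_⟩
    ext v
    simp only [Set.mem_ofPred_eq, Formula.realize_relabel]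
    apply iff_of_eq
    congr 1
    ext (i | i) <;> rfl
  have hY' : A.Definable L {v : Fin 2 → M | v 0 ∈ Y} := by
    have : {v : Fin 2 → M | v 0 ∈ Y} = ⋃ y ∈ hY.toFinset, {v : Fin 2 → M | v 0 = y} := by
      ext; simp
    rw [this]
    have hAY : ∀ y ∈ hY.toFinset, y ∈ A := fun y hy => Or.inr (hY.mem_toFinset.1 hy)
    rw [← Finset.set_biUnion_coe, Set.biUnion_eq_iUnion]
    refine Set.definable_iUnion_of_finite fun y => ?_
    refine ⟨(Term.var 0).equal (L.con (⟨y, hAY y y.2⟩ : A)).term, ?_⟩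
    ext v
    simp
  obtain ⟨θ, hθ⟩ := (hφ.sdiff hY').image_comp (fun _ : Fin 1 => (1 : Fin 2))
  refine ⟨θ, fun z => ?_⟩
  have := Set.ext_iff.1 hθ fun _ => z
  refine this.symm.trans ⟨?_, ?_⟩
  · rintro ⟨v, ⟨hv, hv'⟩, h⟩
    have hz : v 1 = z := congrFun h 0
    refine ⟨v 0, hv', ?_⟩
    have : ![v 0, z] = v := by ext i; fin_cases i <;> simp [hz]
    rwa [this]
  · rintro ⟨x, hx, h⟩
    exact ⟨![x, z], ⟨h, hx⟩, rfl⟩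

variable (L)

/-- (Claim 1 of Lemma 3.2.) In a sufficiently saturated `H`-structure, if
`φ(x, z, ā)` is algebraic in `x` for every value of `z`, then `∃z φ(x, z, ā)` is
non-algebraic iff `∃z ∈ H φ(x, z, ā)` is non-algebraic. -/
theorem statement5 {M : Type w} (L : FirstOrder.Language.{u, v}) [L.Structure M]
    (H : Set M) (hgeom : Geometric L M) (hH : IsHStructure L H)
    (hsat : CountSaturatedH L H)
    {r : ℕ} (φ : L.Formula (Fin 2 ⊕ Fin r)) (c : Fin r → M)
    (halg : ∀ z : M, {x : M | φ.Realize (Sum.elim ![x, z] c)}.Finite) :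
    {x : M | ∃ z : M, φ.Realize (Sum.elim ![x, z] c)}.Infinite ↔
      {x : M | ∃ z ∈ H, φ.Realize (Sum.elim ![x, z] c)}.Infinite := by
  refine ⟨fun hX hY => ?_, fun hY => hY.mono ?_⟩
  rotate_left
  · rintro x ⟨z, _, h⟩
    exact ⟨z, h⟩
  set Y : Set M := {x : M | ∃ z ∈ H, φ.Realize (Sum.elim ![x, z] c)}
  obtain ⟨θ, hθ⟩ := exists_formula_exists_notMem φ c hY
  have hA : (Set.range c ∪ Y).Finite := (Set.finite_range c).union hY
  have hinf : {z : M | θ.Realize fun _ => z}.Infinite := by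
    intro hfin
    refine hX (((hfin.biUnion fun z _ => halg z).union hY).subset ?_)
    rintro x ⟨z, hz⟩
    by_cases hx : x ∈ Y
    · exact Or.inr hx
    · exact Or.inl (Set.mem_biUnion (show z ∈ {z : M | θ.Realize fun _ => z} from
        (hθ z).2 ⟨x, hx, hz⟩) hz)
  obtain ⟨z, hz, hzθ⟩ := hsat.countSaturated.exists_notMem_acl hA.countable θ hinf
  obtain ⟨h, hhH, hsame⟩ := hH.1 _ (FinDim.of_finite hA) z hz
  obtain ⟨x, hx, hxh⟩ := (hθ h).1 ((hsame θ).1 hzθ)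
  exact hx ⟨h, hhH, hxh⟩

end HPaper
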